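/- Let φ be a flow on ℝⁿ and let N be an isolating block with exit set L. For every s ≥ 0 the map f_s : N → N given by f_s(x) = xs if x[0,s] ⊆ N and f_s(x) = x·τ(x) otherwise, is well defined and continuous, satisfies f_s(x) = x for every x ∈ L, and f_0 is the identity of N. -/

import Mathlib

/-!
On `N` the map `f_s` is `x ↦ φ (x, σ x)`, where `σ x = min (s, τ x)` is the stopped exit time
(`stopTime`), so it is enough that `σ` is continuous on `N`. It is upper semicontinuous because `N`
is closed: a point `x u ∉ N` stays outside `N` when `x` is perturbed. It is lower semicontinuous
because `L` is compact: if `t < σ x₀`, then `x₀ [0, t]` misses `L`, since orbits leave `N`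
immediately after meeting `L`; by the tube lemma `x [0, t]` misses `L` for all `x` near `x₀`; and an
orbit starting in `N` can only leave `N` through `L` (`exists_exit`), so `x [0, t] ⊆ N`.
-/

open Set

/-- A flow on `ℝⁿ`: a continuous map `φ : ℝⁿ × ℝ → ℝⁿ` with `φ (x, 0) = x` and
`φ (φ (x, s), t) = φ (x, s + t)`. -/
structure FlowRn (n : ℕ) where
  toFun : (Fin n → ℝ) → ℝ → (Fin n → ℝ)
  continuous_toFun : Continuous fun p : (Fin n → ℝ) × ℝ => toFun p.1 p.2
  map_zero : ∀ x, toFun x 0 = x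
  map_add : ∀ x s t, toFun (toFun x s) t = toFun x (s + t)

variable {n : ℕ}

/-- A set `M` is invariant if `x ℝ ⊆ M` for every `x ∈ M`. -/
def FlowRn.IsInvariant (φ : FlowRn n) (M : Set (Fin n → ℝ)) : Prop :=
  ∀ x ∈ M, ∀ t : ℝ, φ.toFun x t ∈ M

/-- `N⁺ = {x ∈ N : x [0, ∞) ⊆ N}`. -/
def posAsymptotic (φ : FlowRn n) (N : Set (Fin n → ℝ)) : Set (Fin n → ℝ) :=
  {x ∈ N | ∀ t ≥ (0 : ℝ), φ.toFun x t ∈ N}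

/-- `N⁻ = {x ∈ N : x (-∞, 0] ⊆ N}`. -/
def negAsymptotic (φ : FlowRn n) (N : Set (Fin n → ℝ)) : Set (Fin n → ℝ) :=
  {x ∈ N | ∀ t ≤ (0 : ℝ), φ.toFun x t ∈ N}

/-- The exit time `τ (x) = sup {t ≥ 0 : x [0, t] ⊆ N}` of a point `x ∈ N ∖ N⁺`. -/
noncomputable def exitTime (φ : FlowRn n) (N : Set (Fin n → ℝ)) (x : Fin n → ℝ) : ℝ :=
  sSup {t : ℝ | 0 ≤ t ∧ ∀ u ∈ Icc 0 t, φ.toFun x u ∈ N}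

/-- An isolating block `N` (with exit set `L` and entrance set `L'`) for the isolated
invariant compactum `K`. -/
structure IsolatingBlock (φ : FlowRn n) (K N L L' : Set (Fin n → ℝ)) : Prop where
  compact_N : IsCompact N
  compact_K : IsCompact K
  invariant_K : φ.IsInvariant K
  subset_interior : K ⊆ interior N
  maximal : ∀ M ⊆ N, φ.IsInvariant M → M ⊆ K
  compact_L : IsCompact L
  compact_L' : IsCompact L'
  exit_subset : L ⊆ frontier N
  entrance_subset : L' ⊆ frontier N
  boundary_eq : frontier N = L ∪ L'
  entrance_strict : ∀ x ∈ L', ∃ ε > (0 : ℝ), ∀ t ∈ Ico (-ε) (0 : ℝ), φ.toFun x t ∉ N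
  exit_strict : ∀ x ∈ L, ∃ δ > (0 : ℝ), ∀ t ∈ Ioc (0 : ℝ) δ, φ.toFun x t ∉ N
  exit_from_interior : ∀ x ∈ L, ∃ ε > (0 : ℝ), ∀ t ∈ Ico (-ε) (0 : ℝ), φ.toFun x t ∈ interior N
  enter_to_interior :
    ∀ x ∈ frontier N \ L, ∃ δ > (0 : ℝ), ∀ t ∈ Ioc (0 : ℝ) δ, φ.toFun x t ∈ interior N

open Classical in
/-- The map `f_s : N → N`, `f_s (x) = x s` if `x [0, s] ⊆ N` and `f_s (x) = x τ(x)` otherwise. -/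
noncomputable def flowMap (φ : FlowRn n) (N : Set (Fin n → ℝ)) (s : ℝ) (x : Fin n → ℝ) :
    Fin n → ℝ :=
  if ∀ u ∈ Icc (0 : ℝ) s, φ.toFun x u ∈ N then φ.toFun x s else φ.toFun x (exitTime φ N x)

open Filter Topology

/-- The forward orbit segment `x [0, t]` stays in `N`. -/
def StaysIn (φ : FlowRn n) (N : Set (Fin n → ℝ)) (x : Fin n → ℝ) (t : ℝ) : Prop :=
  ∀ u ∈ Icc (0 : ℝ) t, φ.toFun x u ∈ N

open Classical in
/-- The stopped exit time `min (s, τ x)`. The case distinction is needed because `exitTime` has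
the junk value `0` on `N⁺`. -/
noncomputable def stopTime (φ : FlowRn n) (N : Set (Fin n → ℝ)) (s : ℝ) (x : Fin n → ℝ) : ℝ :=
  if StaysIn φ N x s then s else exitTime φ N x

lemma FlowRn.continuous_orbit (φ : FlowRn n) (x : Fin n → ℝ) :
    Continuous fun t => φ.toFun x t :=
  φ.continuous_toFun.comp (by fun_prop : Continuous fun t : ℝ => (x, t))

lemma FlowRn.continuous_time (φ : FlowRn n) (t : ℝ) : Continuous fun x => φ.toFun x t :=
  φ.continuous_toFun.comp (by fun_prop : Continuous fun x : Fin n → ℝ => (x, t))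

lemma StaysIn.mono {φ : FlowRn n} {N : Set (Fin n → ℝ)} {x : Fin n → ℝ} {t t' : ℝ}
    (h : StaysIn φ N x t) (ht : t' ≤ t) : StaysIn φ N x t' :=
  fun u hu => h u ⟨hu.1, hu.2.trans ht⟩

lemma flowMap_eq (φ : FlowRn n) (N : Set (Fin n → ℝ)) (s : ℝ) (x : Fin n → ℝ) :
    flowMap φ N s x = φ.toFun x (stopTime φ N s x) := by
  by_cases h : StaysIn φ N x s
  · rw [stopTime, if_pos h, flowMap]
    exact if_pos h
  · rw [stopTime, if_neg h, flowMap]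
    exact if_neg h

section Block

variable {φ : FlowRn n} {K N L L' : Set (Fin n → ℝ)}

/-- A point of `N` outside the exit set stays in `N` for a short positive time, whether it is
interior or lies on the frontier. -/
lemma IsolatingBlock.stays_of_notMem_exit (hN : IsolatingBlock φ K N L L') {x : Fin n → ℝ}
    (hx : x ∈ N) (hL : x ∉ L) : ∃ δ > (0 : ℝ), StaysIn φ N x δ := by
  suffices h : ∃ δ > (0 : ℝ), ∀ t ∈ Ioc (0 : ℝ) δ, φ.toFun x t ∈ N by
    obtain ⟨δ, hδ, h⟩ := h
    refine ⟨δ, hδ, fun u hu => ?_⟩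
    rcases hu.1.eq_or_lt with rfl | h0
    · rwa [φ.map_zero]
    · exact h u ⟨h0, hu.2⟩
  by_cases hi : x ∈ interior N
  · have hopen : IsOpen ((fun t => φ.toFun x t) ⁻¹' interior N) :=
      isOpen_interior.preimage (φ.continuous_orbit x)
    obtain ⟨ε, hε, hball⟩ := Metric.isOpen_iff.1 hopen 0 (by simpa [φ.map_zero] using hi)
    refine ⟨ε / 2, half_pos hε, fun t ht => interior_subset (hball ?_)⟩
    rw [Metric.mem_ball, Real.dist_eq, sub_zero, abs_of_pos ht.1]
    linarith [ht.2]
  · obtain ⟨δ, hδ, h⟩ := hN.enter_to_interior x ⟨⟨subset_closure hx, hi⟩, hL⟩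
    exact ⟨δ, hδ, fun t ht => interior_subset (h t ht)⟩

/-- Orbits leave `N` immediately after meeting `L`. -/
lemma IsolatingBlock.not_staysIn (hN : IsolatingBlock φ K N L L') {x : Fin n → ℝ} {u t : ℝ}
    (hu : 0 ≤ u) (hL : φ.toFun x u ∈ L) (hut : u < t) : ¬ StaysIn φ N x t := by
  intro h
  obtain ⟨δ, hδ, hout⟩ := hN.exit_strict _ hL
  refine hout (min δ (t - u)) ⟨lt_min hδ (by linarith), min_le_left _ _⟩ ?_
  rw [φ.map_add]
  have h1 : 0 < min δ (t - u) := lt_min hδ (by linarith)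
  have h2 := min_le_right δ (t - u)
  exact h _ ⟨by linarith, by linarith⟩

/-- An orbit that starts in `N` and leaves it does so through `L`. -/
lemma IsolatingBlock.exists_exit (hN : IsolatingBlock φ K N L L') {x : Fin n → ℝ} {t : ℝ}
    (hx : x ∈ N) (ht : ¬ StaysIn φ N x t) :
    ∃ τ, 0 ≤ τ ∧ τ < t ∧ StaysIn φ N x τ ∧ φ.toFun x τ ∈ L := by
  set A : Set ℝ := {r | 0 ≤ r ∧ StaysIn φ N x r} with hA
  have h0 : (0 : ℝ) ∈ A := by
    refine ⟨le_rfl, fun u hu => ?_⟩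
    rw [le_antisymm hu.2 hu.1, φ.map_zero]
    exact hx
  have hlt : ∀ r ∈ A, r < t := fun r hr => lt_of_not_ge fun h => ht (hr.2.mono h)
  have hb : BddAbove A := ⟨t, fun r hr => (hlt r hr).le⟩
  have hend : φ.toFun x (sSup A) ∈ N := by
    have hc : IsClosed ((fun r => φ.toFun x r) ⁻¹' N) :=
      hN.compact_N.isClosed.preimage (φ.continuous_orbit x)
    have hsub : A ⊆ (fun r => φ.toFun x r) ⁻¹' N := fun r hr => hr.2 r ⟨hr.1, le_rfl⟩
    exact closure_minimal hsub hc (csSup_mem_closure ⟨0, h0⟩ hb)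
  have hstay : StaysIn φ N x (sSup A) := by
    intro u hu
    rcases hu.2.eq_or_lt with rfl | hlt'
    · exact hend
    · obtain ⟨a, ha, hua⟩ := exists_lt_of_lt_csSup ⟨0, h0⟩ hlt'
      exact ha.2 u ⟨hu.1, hua.le⟩
  have hnn : 0 ≤ sSup A := le_csSup hb h0
  refine ⟨sSup A, hnn, hlt _ ⟨hnn, hstay⟩, hstay, ?_⟩
  by_contra hL
  obtain ⟨δ, hδ, h⟩ := hN.stays_of_notMem_exit hend hL
  have hmem : sSup A + δ ∈ A := by
    refine ⟨by linarith, fun u hu => ?_⟩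
    rcases le_total u (sSup A) with hle | hge
    · exact hstay u ⟨hu.1, hle⟩
    · have := h (u - sSup A) ⟨by linarith, by linarith [hu.2]⟩
      rwa [φ.map_add, add_sub_cancel] at this
  linarith [le_csSup hb hmem]

lemma IsolatingBlock.exitTime_eq (hN : IsolatingBlock φ K N L L') {x : Fin n → ℝ} {τ : ℝ}
    (h0 : 0 ≤ τ) (hs : StaysIn φ N x τ) (hL : φ.toFun x τ ∈ L) : exitTime φ N x = τ := by
  have : {t : ℝ | 0 ≤ t ∧ ∀ u ∈ Icc 0 t, φ.toFun x u ∈ N} = Icc 0 τ := by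
    ext t
    refine ⟨fun ht => ⟨ht.1, ?_⟩, fun ht => ⟨ht.1, hs.mono ht.2⟩⟩
    exact le_of_not_gt fun h => hN.not_staysIn h0 hL h ht.2
  rw [exitTime, this, csSup_Icc h0]

/-- The stopped exit time is the largest `t ∈ [0, s]` with `x [0, t] ⊆ N`. -/
lemma IsolatingBlock.stopTime_spec (hN : IsolatingBlock φ K N L L') {s : ℝ} (hs : 0 ≤ s)
    {x : Fin n → ℝ} (hx : x ∈ N) :
    0 ≤ stopTime φ N s x ∧ stopTime φ N s x ≤ s ∧
      ∀ t ≤ s, StaysIn φ N x t ↔ t ≤ stopTime φ N s x := by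
  by_cases h : StaysIn φ N x s
  · rw [stopTime, if_pos h]
    exact ⟨hs, le_rfl, fun t ht => ⟨fun _ => ht, h.mono⟩⟩
  · obtain ⟨τ, h0, hlt, hst, hL⟩ := hN.exists_exit hx h
    rw [stopTime, if_neg h, hN.exitTime_eq h0 hst hL]
    exact ⟨h0, hlt.le, fun t _ =>
      ⟨fun ht => le_of_not_gt fun h' => hN.not_staysIn h0 hL h' ht, hst.mono⟩⟩

lemma IsolatingBlock.continuousOn_stopTime (hN : IsolatingBlock φ K N L L') {s : ℝ}
    (hs : 0 ≤ s) : ContinuousOn (stopTime φ N s) N := by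
  intro x₀ hx₀
  obtain ⟨-, hle, hiff⟩ := hN.stopTime_spec hs hx₀
  refine tendsto_order.2 ⟨fun a ha => ?_, fun a ha => ?_⟩
  · obtain ⟨t, hat, ht⟩ := exists_between ha
    have hmiss : ∀ u ∈ Icc (0 : ℝ) t, φ.toFun x₀ u ∉ L := fun u hu hL =>
      hN.not_staysIn hu.1 hL (hu.2.trans_lt ht) ((hiff _ hle).2 le_rfl)
    have htube : ∀ᶠ x in 𝓝 x₀, ∀ u ∈ Icc (0 : ℝ) t, φ.toFun x u ∉ L :=
      isCompact_Icc.eventually_forall_of_forall_eventually fun u hu =>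
        (φ.continuous_toFun.continuousAt (x := (x₀, u))).eventually
          (hN.compact_L.isClosed.isOpen_compl.mem_nhds (hmiss u hu))
    filter_upwards [htube.filter_mono nhdsWithin_le_nhds, self_mem_nhdsWithin] with x hx hxN
    refine hat.trans_le (((hN.stopTime_spec hs hxN).2.2 t (ht.le.trans hle)).1 ?_)
    by_contra hout
    obtain ⟨τ, h0, hlt, -, hL⟩ := hN.exists_exit hxN hout
    exact hx τ ⟨h0, hlt.le⟩ hL
  · rcases lt_or_ge s a with hsa | has
    · filter_upwards [self_mem_nhdsWithin] with x hxN
      exact (hN.stopTime_spec hs hxN).2.1.trans_lt hsa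
    · have hout : ¬ StaysIn φ N x₀ a := fun h => absurd ((hiff a has).1 h) (not_le.2 ha)
      simp only [StaysIn, not_forall] at hout
      obtain ⟨u, hu, huN⟩ := hout
      have hev : ∀ᶠ x in 𝓝 x₀, φ.toFun x u ∉ N :=
        (φ.continuous_time u).continuousAt.eventually
          (hN.compact_N.isClosed.isOpen_compl.mem_nhds huN)
      filter_upwards [hev.filter_mono nhdsWithin_le_nhds, self_mem_nhdsWithin] with x hx hxN
      refine lt_of_not_ge fun h => hx ?_
      exact ((hN.stopTime_spec hs hxN).2.2 a has).2 h u hu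

end Block

/-- For every `s ≥ 0`, the map `f_s : N → N` is well defined (it maps `N`
into `N`) and continuous on `N`, it fixes every point of `L`, and `f_0` is the identity. -/
theorem flowMap_spec (φ : FlowRn n) (K N L L' : Set (Fin n → ℝ))
    (hN : IsolatingBlock φ K N L L') :
    (∀ s ≥ (0 : ℝ),
      MapsTo (flowMap φ N s) N N ∧
      ContinuousOn (flowMap φ N s) N ∧
      (∀ x ∈ L, flowMap φ N s x = x)) ∧
    (∀ x ∈ N, flowMap φ N 0 x = x) := by
  refine ⟨fun s hs => ⟨fun x hx => ?_, ?_, fun x hx => ?_⟩, fun x hx => ?_⟩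
  · obtain ⟨h0, hle, hiff⟩ := hN.stopTime_spec hs hx
    rw [flowMap_eq]
    exact (hiff _ hle).2 le_rfl _ ⟨h0, le_rfl⟩
  · have hcont : ContinuousOn (fun x => φ.toFun x (stopTime φ N s x)) N :=
      φ.continuous_toFun.comp_continuousOn (continuousOn_id.prodMk (hN.continuousOn_stopTime hs))
    exact hcont.congr fun x _ => flowMap_eq φ N s x
  · have hxN : x ∈ N := hN.compact_N.isClosed.frontier_subset (hN.exit_subset hx)
    obtain ⟨h0, hle, hiff⟩ := hN.stopTime_spec hs hxN
    have hL : φ.toFun x 0 ∈ L := by rwa [φ.map_zero]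
    have : stopTime φ N s x = 0 := le_antisymm
      (le_of_not_gt fun h => hN.not_staysIn le_rfl hL h ((hiff _ hle).2 le_rfl)) h0
    rw [flowMap_eq, this, φ.map_zero]
  · obtain ⟨h0, hle, -⟩ := hN.stopTime_spec le_rfl hx
    rw [flowMap_eq, le_antisymm hle h0, φ.map_zero]
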